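/- Let K ⊂ ℝ^{2n} be a convex body with 0 in its interior and smooth boundary, and let T ⊂ ℝ^{2n} be a convex body with 0 in its interior. Then for any capacity carrier γ of K, with period T₀, one has 4·c(K)·c(T) ≤ (length_{JT°}(γ))², where length_{JT°}(γ) = ∫₀^{T₀} ‖γ̇(t)‖_{JT°} dt, ‖x‖_{JT°} = inf{r > 0 : x ∈ r·JT°}, and JT° = {Jy : y ∈ T°}. -/

import Mathlib

open MeasureTheory Real Set Filter intervalIntegral Metric
open scoped InnerProductSpace Topology Pointwise

noncomputable section

/-- The phase space `ℝ^{2n}`. -/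
abbrev E (n : ℕ) := EuclideanSpace ℝ (Fin (2 * n))

/-- The standard complex structure `J` on `ℝ^{2n}`, given in coordinates
`(x₁,y₁,…,xₙ,yₙ)` by `J(x₁,y₁,…,xₙ,yₙ) = (−y₁,x₁,…,−yₙ,xₙ)`. -/
def Jmap (n : ℕ) (v : E n) : E n := WithLp.toLp 2 fun i =>
  if _h : i.val % 2 = 0 then -v ⟨i.val + 1, by have := i.isLt; omega⟩
  else v ⟨i.val - 1, by have := i.isLt; omega⟩

/-- The support function `h_K(u) = sup_{x ∈ K} ⟨x, u⟩`. -/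
def suppFn (n : ℕ) (K : Set (E n)) (u : E n) : ℝ :=
  sSup ((fun x => ⟪x, u⟫_ℝ) '' K)

/-- A convex body: a compact convex set with nonempty interior. -/
def IsConvexBody (n : ℕ) (K : Set (E n)) : Prop :=
  IsCompact K ∧ Convex ℝ K ∧ (interior K).Nonempty

/-- Membership in the loop space `𝓔_p`: the pair `(z, dz)` represents an absolutely
continuous `2π`-periodic loop `z` with derivative `dz ∈ L^p([0,2π])`, mean zero and
normalized action `(1/2)∫₀^{2π} ⟨J z, ż⟩ = 1`. -/
def InE (n : ℕ) (p : ℝ) (z dz : ℝ → E n) : Prop :=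
  Function.Periodic z (2 * π) ∧
  (∀ a b : ℝ, IntervalIntegrable dz volume a b) ∧
  (∀ t, z t = z 0 + ∫ s in (0:ℝ)..t, dz s) ∧
  MemLp dz (ENNReal.ofReal p) (volume.restrict (Set.Ioc (0:ℝ) (2 * π))) ∧
  (∫ t in (0:ℝ)..(2 * π), z t) = 0 ∧
  (1 / 2) * ∫ t in (0:ℝ)..(2 * π), ⟪Jmap n (z t), dz t⟫_ℝ = 1

/-- The (Ekeland–Hofer–Zehnder) capacity of a convex body,
`c(S) = (π · inf_{z ∈ 𝓔₂} (1/2π) ∫₀^{2π} h_S(ż(t)) dt)²`. -/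
def capacity (n : ℕ) (S : Set (E n)) : ℝ :=
  (π * sInf { r : ℝ | ∃ z dz : ℝ → E n, InE n 2 z dz ∧
      r = (1 / (2 * π)) * ∫ t in (0:ℝ)..(2 * π), suppFn n S (dz t) }) ^ 2

/-- The action `𝒜(γ) = (1/2) ∫₀^{T₀} ⟨−Jγ̇(t), γ(t)⟩ dt` of a `T₀`-periodic curve. -/
def action (n : ℕ) (γ : ℝ → E n) (T₀ : ℝ) : ℝ :=
  (1 / 2) * ∫ t in (0:ℝ)..T₀, ⟪-Jmap n (deriv γ t), γ t⟫_ℝ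

/-- A closed characteristic on `∂K`: a nonconstant `T₀`-periodic `C¹` curve lying on
`∂K` satisfying `γ̇ = d·J∇F(γ)` for some `d > 0`, where `F = ‖·‖_K²`. -/
def IsClosedCharacteristic (n : ℕ) (K : Set (E n)) (γ : ℝ → E n) (T₀ : ℝ) : Prop :=
  0 < T₀ ∧ Function.Periodic γ T₀ ∧ ContDiff ℝ 1 γ ∧ (∃ s t, γ s ≠ γ t) ∧
  (∀ t, γ t ∈ frontier K) ∧
  ∃ d : ℝ, 0 < d ∧ ∀ t, deriv γ t = d • Jmap n (gradient (fun x => gauge K x ^ 2) (γ t))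

/-- A capacity carrier of `K`: a closed characteristic on `∂K` of minimal action. -/
def IsCapacityCarrier (n : ℕ) (K : Set (E n)) (γ : ℝ → E n) (T₀ : ℝ) : Prop :=
  IsClosedCharacteristic n K γ T₀ ∧
  ∀ γ' T₀', IsClosedCharacteristic n K γ' T₀' → action n γ T₀ ≤ action n γ' T₀'

/-- The minimal action of a closed characteristic on `∂K`. -/
def minAction (n : ℕ) (K : Set (E n)) : ℝ :=
  sInf { a : ℝ | ∃ γ T₀, IsClosedCharacteristic n K γ T₀ ∧ a = action n γ T₀ }

/-- `K` has smooth boundary: its gauge function is `C¹` away from the origin. -/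
def HasSmoothBoundary (n : ℕ) (K : Set (E n)) : Prop :=
  ContDiffOn ℝ 1 (gauge K) {(0 : E n)}ᶜ

/-- The `p`-sum `K +ₚ T` of Firey: the convex body with support function
`(h_K^p + h_T^p)^{1/p}`. -/
def pSum (n : ℕ) (p : ℝ) (K T : Set (E n)) : Set (E n) :=
  { x | ∀ u, ⟪x, u⟫_ℝ ≤ (suppFn n K u ^ p + suppFn n T u ^ p) ^ (1 / p) }

/-- The polar body `T° = {x : ⟨x,y⟩ ≤ 1 for all y ∈ T}`. -/
def polarBody (n : ℕ) (T : Set (E n)) : Set (E n) :=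
  { x | ∀ y ∈ T, ⟪x, y⟫_ℝ ≤ 1 }

/-- The length `∫₀^{T₀} ‖γ̇(t)‖_B dt` of a curve measured with the gauge of `B`. -/
def lengthIn (n : ℕ) (B : Set (E n)) (γ : ℝ → E n) (T₀ : ℝ) : ℝ :=
  ∫ t in (0:ℝ)..T₀, gauge B (deriv γ t)

/-- Critical point of the functional `I_p(z) = ∫₀^{2π} h_K^p(ż(t)) dt` on `𝓔_p`. -/
def IsCriticalPoint (n : ℕ) (p : ℝ) (K : Set (E n)) (z dz : ℝ → E n) : Prop :=
  ∀ ξ dξ : ℝ → E n,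
    Function.Periodic ξ (2 * π) →
    (∀ a b : ℝ, IntervalIntegrable dξ volume a b) →
    (∀ t, ξ t = ξ 0 + ∫ s in (0:ℝ)..t, dξ s) →
    MemLp dξ (ENNReal.ofReal p) (volume.restrict (Set.Ioc (0:ℝ) (2 * π))) →
    (∫ t in (0:ℝ)..(2 * π), ξ t) = 0 →
    (∫ t in (0:ℝ)..(2 * π), ⟪ξ t, Jmap n (dz t)⟫_ℝ) = 0 →
    (∫ t in (0:ℝ)..(2 * π), ⟪gradient (fun u => suppFn n K u ^ p) (dz t), dξ t⟫_ℝ) = 0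

/-- The rotation-invariant probability measure on the unit sphere of `ℝ^{2n}`. -/
def sphereMeasure (n : ℕ) : Measure (sphere (0 : E n) 1) :=
  ((volume : Measure (E n)).toSphere Set.univ)⁻¹ • (volume : Measure (E n)).toSphere

/-- The mean width parameter `M*(K) = ∫_{S^{2n-1}} h_K dσ`. -/
def meanWidth (n : ℕ) (K : Set (E n)) : ℝ :=
  ∫ x : sphere (0 : E n) 1, suppFn n K (x : E n) ∂(sphereMeasure n)

/-!
By the polarity `‖·‖_{JT°} = h_T(-J ·)`, the length of `γ` is `∫ h_T(-Jγ̇)`. The loop `-Jγ`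
has the same action as `γ`; centred and rescaled to unit action and period `2π`, it competes in the
infimum defining `c(T)`, which gives `4·𝒜(γ)·c(T) ≤ length(γ)²`.

For `T = K` this integral is computed exactly: `-Jγ̇ = d·∇‖·‖_K²(γ)` is an outer normal of `K`
at `γ`, so `h_K(-Jγ̇) = ⟪-Jγ̇, γ⟫`, whose integral is `2·𝒜(γ)`. Hence `c(K) ≤ 𝒜(γ)`, and the two
bounds combine.
-/

section Gauge

variable {F : Type*} [NormedAddCommGroup F] [NormedSpace ℝ F] {K : Set F} {x : F}

lemma fderiv_gauge_self (hx : DifferentiableAt ℝ (gauge K) x) :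
    fderiv ℝ (gauge K) x x = gauge K x := by
  have hslope := (hx.hasFDerivAt.hasLineDerivAt x).tendsto_slope_zero_right
  refine tendsto_nhds_unique (hslope.congr' ?_) tendsto_const_nhds
  filter_upwards [self_mem_nhdsWithin] with s (hs : 0 < s)
  have hray : gauge K (x + s • x) = (1 + s) * gauge K x := by
    rw [← smul_eq_mul, ← gauge_smul_of_nonneg (by positivity), add_smul, one_smul]
  rw [hray, smul_eq_mul]
  field_simp
  ring

lemma fderiv_gauge_le (hconv : Convex ℝ K) (habs : Absorbent ℝ K)
    (hx : DifferentiableAt ℝ (gauge K) x) (y : F) :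
    fderiv ℝ (gauge K) x y ≤ gauge K y := by
  refine le_of_tendsto (hx.hasFDerivAt.hasLineDerivAt y).tendsto_slope_zero_right ?_
  filter_upwards [self_mem_nhdsWithin] with s (hs : 0 < s)
  have hsub : gauge K (x + s • y) ≤ gauge K x + s * gauge K y := by
    simpa [gauge_smul_of_nonneg hs.le] using gauge_add_le hconv habs x (s • y)
  rw [smul_eq_mul, inv_mul_le_iff₀ hs]
  linarith

end Gauge

section GaugeGradient

variable {F : Type*} [NormedAddCommGroup F] [InnerProductSpace ℝ F] [CompleteSpace F]
  {K : Set F} {x : F}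

lemma inner_gradient_gauge_sq (hx : DifferentiableAt ℝ (gauge K) x) (y : F) :
    ⟪y, gradient (fun v => gauge K v ^ 2) x⟫_ℝ = 2 * gauge K x * fderiv ℝ (gauge K) x y := by
  rw [real_inner_comm, inner_gradient_left, fderiv_fun_pow 2 hx]
  simp

lemma inner_gradient_gauge_sq_self_eq_two (hconv : Convex ℝ K) (hnhds : K ∈ 𝓝 0)
    (hdiff : DifferentiableAt ℝ (gauge K) x) (hx : x ∈ frontier K) :
    ⟪x, gradient (fun v => gauge K v ^ 2) x⟫_ℝ = 2 := by
  rw [inner_gradient_gauge_sq hdiff, fderiv_gauge_self hdiff,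
    (gauge_eq_one_iff_mem_frontier hconv hnhds).2 hx]
  norm_num

lemma inner_gradient_gauge_sq_le_two (hconv : Convex ℝ K) (hnhds : K ∈ 𝓝 0)
    (hdiff : DifferentiableAt ℝ (gauge K) x) (hx : x ∈ frontier K) {y : F} (hy : y ∈ K) :
    ⟪y, gradient (fun v => gauge K v ^ 2) x⟫_ℝ ≤ 2 := by
  have hle : fderiv ℝ (gauge K) x y ≤ 1 :=
    (fderiv_gauge_le hconv (absorbent_nhds_zero hnhds) hdiff y).trans (gauge_le_one_of_mem hy)
  rw [inner_gradient_gauge_sq hdiff, (gauge_eq_one_iff_mem_frontier hconv hnhds).2 hx]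
  linarith

end GaugeGradient

lemma integral_deriv_eq_zero_of_periodic {F : Type*} [NormedAddCommGroup F] [NormedSpace ℝ F]
    [CompleteSpace F] {w : ℝ → F} {T : ℝ} (hw : ContDiff ℝ 1 w) (hper : Function.Periodic w T) :
    ∫ t in (0 : ℝ)..T, deriv w t = 0 := by
  rw [integral_deriv_eq_sub (fun t _ => hw.differentiable one_ne_zero t)
    ((hw.continuous_deriv le_rfl).intervalIntegrable _ _), hper.eq, sub_self]

lemma deriv_const_smul_comp_const_mul {F : Type*} [NormedAddCommGroup F] [NormedSpace ℝ F]
    (c k : ℝ) (w : ℝ → F) (t : ℝ) :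
    deriv (fun s => c • w (k * s)) t = (c * k) • deriv w (k * t) := by
  rw [deriv_fun_const_smul_field, deriv_comp_mul_left, smul_smul]

variable {n : ℕ}

section ComplexStructure

/-- The complex structure `J` as a continuous linear map. -/
def JmapCLM (n : ℕ) : E n →L[ℝ] E n := LinearMap.toContinuousLinearMap
  { toFun := Jmap n
    map_add' x y := by
      ext i
      simp only [Jmap, PiLp.add_apply]
      split_ifs <;> ring
    map_smul' c x := by
      ext i
      simp only [Jmap, PiLp.smul_apply, smul_eq_mul, RingHom.id_apply]
      split_ifs <;> ring }

@[fun_prop]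
lemma continuous_Jmap : Continuous (Jmap n) := (JmapCLM n).continuous

lemma Jmap_neg (x : E n) : Jmap n (-x) = -Jmap n x := (JmapCLM n).map_neg x

lemma Jmap_sub (x y : E n) : Jmap n (x - y) = Jmap n x - Jmap n y := (JmapCLM n).map_sub x y

lemma Jmap_smul (c : ℝ) (x : E n) : Jmap n (c • x) = c • Jmap n x := (JmapCLM n).map_smul c x

/-- The index of the coordinate conjugate to the `i`-th one: it exchanges the positions of `xⱼ`
and `yⱼ`. With the zero-based indexing of `Fin (2 * n)`, the `xⱼ` sit at the even positions. -/
def conjIndex (i : Fin (2 * n)) : Fin (2 * n) :=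
  if _h : i.val % 2 = 0 then ⟨i.val + 1, by omega⟩ else ⟨i.val - 1, by omega⟩

lemma Jmap_apply_of_even (v : E n) {i : Fin (2 * n)} (hi : i.val % 2 = 0) :
    Jmap n v i = -v (conjIndex i) := by
  simp [Jmap, conjIndex, hi]

lemma Jmap_apply_of_odd (v : E n) {i : Fin (2 * n)} (hi : i.val % 2 = 1) :
    Jmap n v i = v (conjIndex i) := by
  simp [Jmap, conjIndex, hi]

lemma val_conjIndex (i : Fin (2 * n)) :
    (conjIndex i).val = if i.val % 2 = 0 then i.val + 1 else i.val - 1 := by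
  unfold conjIndex
  split_ifs <;> rfl

lemma conjIndex_conjIndex (i : Fin (2 * n)) : conjIndex (conjIndex i) = i := by
  ext
  grind [val_conjIndex]

lemma conjIndex_parity (i : Fin (2 * n)) :
    i.val % 2 = 0 ∧ (conjIndex i).val % 2 = 1 ∨ i.val % 2 = 1 ∧ (conjIndex i).val % 2 = 0 := by
  grind [val_conjIndex]

lemma Jmap_Jmap (x : E n) : Jmap n (Jmap n x) = -x := by
  ext i
  rcases conjIndex_parity i with ⟨hi, hconj⟩ | ⟨hi, hconj⟩ <;>
    simp [Jmap_apply_of_even, Jmap_apply_of_odd, hi, hconj, conjIndex_conjIndex]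

lemma inner_Jmap_left (x y : E n) : ⟪Jmap n x, y⟫_ℝ = -⟪x, Jmap n y⟫_ℝ := by
  rw [eq_neg_iff_add_eq_zero, PiLp.inner_apply, PiLp.inner_apply, ← Finset.sum_add_distrib]
  have hne (i : Fin (2 * n)) : conjIndex i ≠ i := fun h => by
    have hparity := conjIndex_parity i
    rw [h] at hparity
    omega
  refine Finset.sum_ninvolution conjIndex (fun i => ?_) (fun i _ => hne i)
    (fun _ => Finset.mem_univ _) conjIndex_conjIndex
  rcases conjIndex_parity i with ⟨hi, hconj⟩ | ⟨hi, hconj⟩ <;>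
    simp [Jmap_apply_of_even, Jmap_apply_of_odd, hi, hconj, conjIndex_conjIndex]

lemma inner_neg_Jmap_left (x y : E n) : ⟪-Jmap n x, y⟫_ℝ = ⟪Jmap n y, x⟫_ℝ := by
  rw [inner_neg_left, inner_Jmap_left, neg_neg, real_inner_comm]

lemma deriv_neg_Jmap_comp {γ : ℝ → E n} {t : ℝ} (hγ : DifferentiableAt ℝ γ t) :
    deriv (fun s => -Jmap n (γ s)) t = -Jmap n (deriv γ t) :=
  ((JmapCLM n).hasFDerivAt.comp_hasDerivAt t hγ.hasDerivAt).neg.deriv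

lemma gauge_image_Jmap (B : Set (E n)) (x : E n) :
    gauge (Jmap n '' B) x = gauge B (-Jmap n x) := by
  have hmem (v : E n) : v ∈ Jmap n '' B ↔ -Jmap n v ∈ B := by
    constructor
    · rintro ⟨u, hu, rfl⟩
      rwa [Jmap_Jmap, neg_neg]
    · exact fun hv => ⟨_, hv, by rw [Jmap_neg, Jmap_Jmap, neg_neg]⟩
  simp only [gauge_def', hmem, Jmap_smul, smul_neg]

end ComplexStructure

section SupportFunction

variable {S : Set (E n)}

lemma suppFn_nonneg (h0 : (0 : E n) ∈ S) (u : E n) : 0 ≤ suppFn n S u :=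
  Real.sSup_nonneg' ⟨0, ⟨0, h0, inner_zero_left u⟩, le_rfl⟩

lemma suppFn_smul (S : Set (E n)) {c : ℝ} (hc : 0 ≤ c) (u : E n) :
    suppFn n S (c • u) = c * suppFn n S u := by
  simp only [suppFn, ← smul_eq_mul, ← Real.sSup_smul_of_nonneg hc, ← image_smul, image_image,
    inner_smul_right]

lemma suppFn_le_iff (hS : Bornology.IsBounded S) (hne : S.Nonempty) {u : E n} {r : ℝ} :
    suppFn n S u ≤ r ↔ ∀ y ∈ S, ⟪y, u⟫_ℝ ≤ r := by
  have hbdd : BddAbove ((fun y => ⟪y, u⟫_ℝ) '' S) := by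
    obtain ⟨C, hC⟩ := hS.exists_norm_le
    refine ⟨C * ‖u‖, ?_⟩
    rintro _ ⟨y, hy, rfl⟩
    exact (real_inner_le_norm y u).trans (by gcongr; exact hC y hy)
  rw [suppFn, csSup_le_iff hbdd (hne.image _), forall_mem_image]

lemma gauge_polarBody (hS : Bornology.IsBounded S) (h0 : (0 : E n) ∈ S) (x : E n) :
    gauge (polarBody n S) x = suppFn n S x := by
  have hmem {r : ℝ} (hr : 0 < r) : x ∈ r • polarBody n S ↔ suppFn n S x ≤ r := by
    rw [mem_smul_set_iff_inv_smul_mem₀ hr.ne', suppFn_le_iff hS ⟨0, h0⟩]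
    simp only [polarBody, mem_ofPred_eq, real_inner_smul_left, inv_mul_le_iff₀ hr, mul_one,
      real_inner_comm x]
  refine le_antisymm (le_of_forall_gt_imp_ge_of_dense fun r hr => ?_) ?_
  · have hr0 : 0 < r := (suppFn_nonneg h0 x).trans_lt hr
    exact gauge_le_of_mem hr0.le ((hmem hr0).2 hr.le)
  · have hpos : 0 < suppFn n S x + 1 := by linarith [suppFn_nonneg h0 x]
    exact le_csInf ⟨_, hpos, (hmem hpos).2 (by linarith)⟩ fun r ⟨hr, hxr⟩ => (hmem hr).1 hxr

lemma suppFn_eq_inner {x u : E n} (hx : x ∈ S) (hmax : ∀ y ∈ S, ⟪y, u⟫_ℝ ≤ ⟪x, u⟫_ℝ) :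
    suppFn n S u = ⟪x, u⟫_ℝ :=
  IsGreatest.csSup_eq ⟨mem_image_of_mem _ hx, forall_mem_image.2 hmax⟩

end SupportFunction

lemma lengthIn_image_Jmap_polarBody {S : Set (E n)} (hS : Bornology.IsBounded S)
    (h0 : (0 : E n) ∈ S) (γ : ℝ → E n) (T₀ : ℝ) :
    lengthIn n (Jmap n '' polarBody n S) γ T₀ =
      ∫ t in (0 : ℝ)..T₀, suppFn n S (-Jmap n (deriv γ t)) := by
  simp only [lengthIn, gauge_image_Jmap, gauge_polarBody hS h0]

section Action

variable {w : ℝ → E n} {T : ℝ}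

lemma action_eq_integral_inner_Jmap (w : ℝ → E n) (T : ℝ) :
    action n w T = (1 / 2) * ∫ t in (0 : ℝ)..T, ⟪Jmap n (w t), deriv w t⟫_ℝ := by
  simp only [action, inner_neg_Jmap_left]

lemma action_neg_Jmap_comp (hw : Differentiable ℝ w) (T : ℝ) :
    action n (fun t => -Jmap n (w t)) T = action n w T := by
  have hpt (t : ℝ) : ⟪Jmap n (-Jmap n (w t)), -Jmap n (deriv w t)⟫_ℝ =
      ⟪-Jmap n (deriv w t), w t⟫_ℝ := by
    rw [Jmap_neg, Jmap_Jmap, neg_neg, real_inner_comm]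
  rw [action_eq_integral_inner_Jmap]
  simp only [deriv_neg_Jmap_comp (hw _), hpt, action]

lemma action_sub_const (hw : ContDiff ℝ 1 w) (hper : Function.Periodic w T) (m : E n) :
    action n (fun t => w t - m) T = action n w T := by
  have hdw : Continuous (deriv w) := hw.continuous_deriv le_rfl
  have hconst : ∫ t in (0 : ℝ)..T, ⟪Jmap n m, deriv w t⟫_ℝ = 0 := by
    have := (innerSL ℝ (Jmap n m)).intervalIntegral_comp_comm
      (hdw.intervalIntegrable (μ := volume) 0 T)
    simpa [integral_deriv_eq_zero_of_periodic hw hper] using this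
  have hint (u : ℝ → E n) (hu : Continuous u) :
      IntervalIntegrable (fun t => ⟪Jmap n (u t), deriv w t⟫_ℝ) volume 0 T :=
    (by fun_prop : Continuous _).intervalIntegrable _ _
  simp only [action_eq_integral_inner_Jmap, deriv_sub_const, Jmap_sub, inner_sub_left]
  rw [integral_sub (hint w hw.continuous) (hint _ continuous_const), hconst, sub_zero]

lemma action_const_smul_comp_const_mul (c k : ℝ) (w : ℝ → E n) (T : ℝ) :
    action n (fun t => c • w (k * t)) T = c ^ 2 * action n w (k * T) := by
  have hpt (t : ℝ) : ⟪-Jmap n ((c * k) • deriv w (k * t)), c • w (k * t)⟫_ℝ =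
      c ^ 2 * (k * ⟪-Jmap n (deriv w (k * t)), w (k * t)⟫_ℝ) := by
    rw [Jmap_smul, ← smul_neg, real_inner_smul_left, real_inner_smul_right]
    ring
  simp only [action, deriv_const_smul_comp_const_mul, hpt, intervalIntegral.integral_const_mul]
  rw [mul_integral_comp_mul_left (f := fun t => ⟪-Jmap n (deriv w t), w t⟫_ℝ), mul_zero]
  ring

lemma integral_suppFn_deriv_const_smul_comp_const_mul (S : Set (E n)) {c k : ℝ} (hc : 0 ≤ c)
    (hk : 0 ≤ k) (w : ℝ → E n) (T : ℝ) :
    ∫ t in (0 : ℝ)..T, suppFn n S (deriv (fun s => c • w (k * s)) t) =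
      c * ∫ t in (0 : ℝ)..(k * T), suppFn n S (deriv w t) := by
  simp only [deriv_const_smul_comp_const_mul, suppFn_smul S (mul_nonneg hc hk), mul_assoc,
    intervalIntegral.integral_const_mul]
  rw [mul_integral_comp_mul_left (f := fun t => suppFn n S (deriv w t)), mul_zero]

end Action

section Capacity

variable {S : Set (E n)} {w : ℝ → E n} {T : ℝ}

lemma inE_sub_average (p : ℝ) (hw : ContDiff ℝ 1 w) (hper : Function.Periodic w (2 * π))
    (hA : action n w (2 * π) = 1) :
    InE n p (fun t => w t - ⨍ s in (0 : ℝ)..(2 * π), w s) (deriv w) := by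
  have hdw : Continuous (deriv w) := hw.continuous_deriv le_rfl
  refine ⟨fun t => by simp only [hper t], hdw.intervalIntegrable, fun t => ?_, ?_, ?_, ?_⟩
  · rw [integral_deriv_eq_sub (fun s _ => hw.differentiable one_ne_zero s)
      (hdw.intervalIntegrable _ _)]
    module
  · obtain ⟨C, hC⟩ := isCompact_Icc.exists_bound_of_continuousOn (s := Icc 0 (2 * π))
      hdw.continuousOn
    exact MemLp.of_bound hdw.aestronglyMeasurable C <|
      ae_restrict_of_forall_mem measurableSet_Ioc fun t ht => hC t (Ioc_subset_Icc_self ht)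
  · rw [integral_of_le two_pi_pos.le, uIoc_of_le two_pi_pos.le]
    exact integral_sub_average _ _
  · have hshift := action_sub_const hw hper (⨍ s in (0 : ℝ)..(2 * π), w s)
    rwa [hA, action_eq_integral_inner_Jmap, deriv_sub_const_fun] at hshift

lemma four_mul_capacity_le_of_inE (h0 : (0 : E n) ∈ S) {z dz : ℝ → E n} (hz : InE n 2 z dz) :
    4 * capacity n S ≤ (∫ t in (0 : ℝ)..(2 * π), suppFn n S (dz t)) ^ 2 := by
  set R := {r : ℝ | ∃ z dz : ℝ → E n, InE n 2 z dz ∧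
    r = (1 / (2 * π)) * ∫ t in (0 : ℝ)..(2 * π), suppFn n S (dz t)}
  set L := ∫ t in (0 : ℝ)..(2 * π), suppFn n S (dz t)
  have hnonneg : ∀ r ∈ R, 0 ≤ r := by
    rintro r ⟨z, dz, -, rfl⟩
    exact mul_nonneg (by positivity)
      (integral_nonneg two_pi_pos.le fun t _ => suppFn_nonneg h0 _)
  have hinf : 0 ≤ sInf R := Real.sInf_nonneg hnonneg
  have hle : sInf R ≤ 1 / (2 * π) * L := csInf_le ⟨0, hnonneg⟩ ⟨z, dz, hz, rfl⟩
  calc 4 * capacity n S = 4 * (π * sInf R) ^ 2 := rfl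
    _ ≤ 4 * (π * (1 / (2 * π) * L)) ^ 2 := by gcongr
    _ = L ^ 2 := by field_simp; norm_num

lemma four_mul_action_mul_capacity_le_integral_suppFn (h0 : (0 : E n) ∈ S) (hT : 0 < T)
    (hw : ContDiff ℝ 1 w) (hper : Function.Periodic w T) :
    4 * action n w T * capacity n S ≤ (∫ t in (0 : ℝ)..T, suppFn n S (deriv w t)) ^ 2 := by
  have hcap : 0 ≤ capacity n S := sq_nonneg _
  rcases le_or_gt (action n w T) 0 with hA | hA
  · have hneg : 4 * action n w T * capacity n S ≤ 0 :=
      mul_nonpos_of_nonpos_of_nonneg (by linarith) hcap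
    exact hneg.trans (sq_nonneg _)
  set c := (√(action n w T))⁻¹ with hc
  set k := T / (2 * π)
  have hkT : k * (2 * π) = T := div_mul_cancel₀ T two_pi_pos.ne'
  have hcA : c ^ 2 * action n w T = 1 := by
    rw [hc, inv_pow, Real.sq_sqrt hA.le, inv_mul_cancel₀ hA.ne']
  have hv : ContDiff ℝ 1 fun t => c • w (k * t) := by fun_prop
  have hvper : Function.Periodic (fun t => c • w (k * t)) (2 * π) := fun t => by
    simp only [mul_add, hkT, hper (k * t)]
  have hvA : action n (fun t => c • w (k * t)) (2 * π) = 1 := by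
    rw [action_const_smul_comp_const_mul, hkT, hcA]
  have hle := four_mul_capacity_le_of_inE h0 (inE_sub_average 2 hv hvper hvA)
  rw [integral_suppFn_deriv_const_smul_comp_const_mul S (by positivity) (by positivity),
    hkT] at hle
  calc 4 * action n w T * capacity n S = action n w T * (4 * capacity n S) := by ring
    _ ≤ action n w T * (c * ∫ t in (0 : ℝ)..T, suppFn n S (deriv w t)) ^ 2 := by gcongr
    _ = (c ^ 2 * action n w T) * (∫ t in (0 : ℝ)..T, suppFn n S (deriv w t)) ^ 2 := by ring
    _ = (∫ t in (0 : ℝ)..T, suppFn n S (deriv w t)) ^ 2 := by rw [hcA, one_mul]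

lemma four_mul_action_mul_capacity_le_integral_suppFn_neg_Jmap (h0 : (0 : E n) ∈ S) (hT : 0 < T)
    (hw : ContDiff ℝ 1 w) (hper : Function.Periodic w T) :
    4 * action n w T * capacity n S ≤
      (∫ t in (0 : ℝ)..T, suppFn n S (-Jmap n (deriv w t))) ^ 2 := by
  have hdiff : Differentiable ℝ w := hw.differentiable one_ne_zero
  have hJw : ContDiff ℝ 1 fun t => -Jmap n (w t) := ((JmapCLM n).contDiff.comp hw).neg
  have hJper : Function.Periodic (fun t => -Jmap n (w t)) T := fun t => by simp only [hper t]
  have hle := four_mul_action_mul_capacity_le_integral_suppFn h0 hT hJw hJper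
  simpa only [action_neg_Jmap_comp hdiff, deriv_neg_Jmap_comp (hdiff _)] using hle

end Capacity

section ClosedCharacteristic

variable {K : Set (E n)} {γ : ℝ → E n} {T₀ : ℝ}

lemma HasSmoothBoundary.differentiableAt_gauge (hKs : HasSmoothBoundary n K)
    (h0 : (0 : E n) ∈ interior K) {x : E n} (hx : x ∈ frontier K) :
    DifferentiableAt ℝ (gauge K) x := by
  have hx0 : x ≠ 0 := by
    rintro rfl
    exact hx.2 h0
  exact (hKs.differentiableOn one_ne_zero).differentiableAt (isOpen_compl_singleton.mem_nhds hx0)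

namespace IsClosedCharacteristic

lemma exists_neg_Jmap_deriv_eq (hγ : IsClosedCharacteristic n K γ T₀) :
    ∃ d : ℝ, 0 < d ∧
      ∀ t, -Jmap n (deriv γ t) = d • gradient (fun x => gauge K x ^ 2) (γ t) := by
  obtain ⟨-, -, -, -, -, d, hd, hode⟩ := hγ
  exact ⟨d, hd, fun t => by rw [hode, Jmap_smul, Jmap_Jmap, smul_neg, neg_neg]⟩

lemma action_pos (hγ : IsClosedCharacteristic n K γ T₀) (hconv : Convex ℝ K)
    (h0 : (0 : E n) ∈ interior K) (hKs : HasSmoothBoundary n K) : 0 < action n γ T₀ := by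
  obtain ⟨d, hd, hnormal⟩ := hγ.exists_neg_Jmap_deriv_eq
  obtain ⟨hT₀, -, -, -, hfr, -⟩ := hγ
  have hpt (t : ℝ) : ⟪-Jmap n (deriv γ t), γ t⟫_ℝ = d * 2 := by
    rw [hnormal, real_inner_smul_left, real_inner_comm, inner_gradient_gauge_sq_self_eq_two hconv
      (mem_interior_iff_mem_nhds.1 h0) (hKs.differentiableAt_gauge h0 (hfr t)) (hfr t)]
  simp only [action, hpt, intervalIntegral.integral_const, smul_eq_mul]
  positivity

lemma suppFn_neg_Jmap_deriv (hγ : IsClosedCharacteristic n K γ T₀) (hcl : IsClosed K)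
    (hconv : Convex ℝ K) (h0 : (0 : E n) ∈ interior K) (hKs : HasSmoothBoundary n K) (t : ℝ) :
    suppFn n K (-Jmap n (deriv γ t)) = ⟪-Jmap n (deriv γ t), γ t⟫_ℝ := by
  obtain ⟨d, hd, hnormal⟩ := hγ.exists_neg_Jmap_deriv_eq
  obtain ⟨-, -, -, -, hfr, -⟩ := hγ
  have hnhds := mem_interior_iff_mem_nhds.1 h0
  have hdiff := hKs.differentiableAt_gauge h0 (hfr t)
  rw [hnormal, suppFn_smul K hd.le, real_inner_smul_left, real_inner_comm]
  congr 1
  refine suppFn_eq_inner (hcl.frontier_subset (hfr t)) fun y hy => ?_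
  rw [inner_gradient_gauge_sq_self_eq_two hconv hnhds hdiff (hfr t)]
  exact inner_gradient_gauge_sq_le_two hconv hnhds hdiff (hfr t) hy

lemma integral_suppFn_neg_Jmap_deriv (hγ : IsClosedCharacteristic n K γ T₀) (hcl : IsClosed K)
    (hconv : Convex ℝ K) (h0 : (0 : E n) ∈ interior K) (hKs : HasSmoothBoundary n K) :
    ∫ t in (0 : ℝ)..T₀, suppFn n K (-Jmap n (deriv γ t)) = 2 * action n γ T₀ := by
  simp only [hγ.suppFn_neg_Jmap_deriv hcl hconv h0 hKs, action]
  ring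

lemma capacity_le_action (hγ : IsClosedCharacteristic n K γ T₀) (hK : IsConvexBody n K)
    (h0 : (0 : E n) ∈ interior K) (hKs : HasSmoothBoundary n K) :
    capacity n K ≤ action n γ T₀ := by
  obtain ⟨hcomp, hconv, -⟩ := hK
  have hpos := hγ.action_pos hconv h0 hKs
  have hlength := hγ.integral_suppFn_neg_Jmap_deriv hcomp.isClosed hconv h0 hKs
  obtain ⟨hT₀, hper, hsmooth, -⟩ := hγ
  refine le_of_mul_le_mul_left ?_ (show 0 < 4 * action n γ T₀ by positivity)
  calc 4 * action n γ T₀ * capacity n K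
      ≤ (∫ t in (0 : ℝ)..T₀, suppFn n K (-Jmap n (deriv γ t))) ^ 2 :=
        four_mul_action_mul_capacity_le_integral_suppFn_neg_Jmap (interior_subset h0) hT₀
          hsmooth hper
    _ = 4 * action n γ T₀ * action n γ T₀ := by rw [hlength]; ring

end IsClosedCharacteristic

end ClosedCharacteristic

theorem four_capacity_mul_le_length_sq_general {K T : Set (E n)} (hK : IsConvexBody n K)
    (h0K : (0 : E n) ∈ interior K) (hKs : HasSmoothBoundary n K) (hT : Bornology.IsBounded T)
    (h0T : (0 : E n) ∈ T) {γ : ℝ → E n} {T₀ : ℝ} (hγ : IsClosedCharacteristic n K γ T₀) :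
    4 * capacity n K * capacity n T ≤ (lengthIn n (Jmap n '' polarBody n T) γ T₀) ^ 2 := by
  have hcT : 0 ≤ capacity n T := sq_nonneg _
  have hcK := hγ.capacity_le_action hK h0K hKs
  obtain ⟨hT₀, hper, hsmooth, -⟩ := hγ
  calc 4 * capacity n K * capacity n T ≤ 4 * action n γ T₀ * capacity n T := by gcongr
    _ ≤ (∫ t in (0 : ℝ)..T₀, suppFn n T (-Jmap n (deriv γ t))) ^ 2 :=
        four_mul_action_mul_capacity_le_integral_suppFn_neg_Jmap h0T hT₀ hsmooth hper
    _ = (lengthIn n (Jmap n '' polarBody n T) γ T₀) ^ 2 := by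
        rw [lengthIn_image_Jmap_polarBody hT h0T]

/-- **Isoperimetric-type inequality for capacities:** for any capacity carrier `γ` of `K`,
`4·c(K)·c(T) ≤ (length_{JT°}(γ))²`. -/
theorem four_capacity_mul_le_length_sq (n : ℕ) (K T : Set (E n))
    (hK : IsConvexBody n K) (h0K : (0 : E n) ∈ interior K) (hKs : HasSmoothBoundary n K)
    (hT : IsConvexBody n T) (h0T : (0 : E n) ∈ interior T)
    (γ : ℝ → E n) (T₀ : ℝ) (hγ : IsCapacityCarrier n K γ T₀) :
    4 * capacity n K * capacity n T ≤ (lengthIn n (Jmap n '' polarBody n T) γ T₀) ^ 2 := by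
  exact four_capacity_mul_le_length_sq_general hK h0K hKs hT.1.isBounded (interior_subset h0T) hγ.1
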